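/- Let A be a C*-algebra with multiplier algebra M(A), and let s ∈ M(A) be an isometry defining the inner endomorphism ρ(a) := s a s* of A. Then the intertwiner space (ι, ρ) := { t ∈ M(A) : ρ(a) t = t a for all a ∈ A } equals ZM(A)·s, the closed Hilbert ZM(A)-bimodule generated by s. -/

import Mathlib

/-!
STATEMENT 3: Let `A` be a C*-algebra with multiplier algebra `M(A)`, and let
`s ∈ M(A)` be an isometry defining the inner endomorphism `ρ(a) := s a s*` of `A`.
Then the intertwiner space `(ι, ρ) := { t ∈ M(A) : ρ(a) t = t a for all a ∈ A }`
equals `ZM(A)·s`, the Hilbert `ZM(A)`-bimodule generated by `s`.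

The multiplier algebra is realized as the double centralizer algebra `𝓜(ℂ, A)`, with
the canonical coercion `A → 𝓜(ℂ, A)`.
-/

open scoped MultiplierAlgebra

/-!
Put `r = s*`, so that `r s = 1`, and suppose `(s a r) t = t a` for all `a ∈ A`. Multiplying by `r`
on the left gives `a (r t) = (r t) a`, so `r t` commutes with `A`; since `A` is a faithful left
ideal of `M(A)`, this makes `r t` central. Moreover `s (r t) a = s a r t = t a` for all `a ∈ A`,
and faithfulness turns this into `t = s (r t) = (r t) s`.
-/

/-- A left ideal `I` of a multiplicative structure `M` on which `M` acts faithfully by left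
multiplication. It records what is used of the position of an algebra inside its multiplier
algebra. The ideal is encoded as a set because only multiplication is involved. -/
structure IsFaithfulLeftIdeal {M : Type*} [Mul M] (I : Set M) : Prop where
  mul_mem : ∀ (m : M) {a : M}, a ∈ I → m * a ∈ I
  eq_of_mul_eq : ∀ {x y : M}, (∀ a ∈ I, x * a = y * a) → x = y

namespace IsFaithfulLeftIdeal

theorem centralizer_eq_center {M : Type*} [Semigroup M] {I : Set M} (hI : IsFaithfulLeftIdeal I) :
    Set.centralizer I = Set.center M := by
  refine Set.Subset.antisymm (fun z hz ↦ ?_) (Set.center_subset_centralizer I)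
  refine Semigroup.mem_center_iff.2 fun m ↦ hI.eq_of_mul_eq fun a ha ↦ ?_
  calc m * z * a = m * a * z := by rw [mul_assoc, ← hz a ha, mul_assoc]
    _ = z * m * a := by rw [hz _ (hI.mul_mem m ha), mul_assoc]

variable {M : Type*} [Monoid M] {I : Set M} {r s t : M}

theorem mul_mem_center_of_intertwines_conj (hI : IsFaithfulLeftIdeal I) (hrs : r * s = 1)
    (ht : ∀ a ∈ I, s * a * r * t = t * a) : r * t ∈ Set.center M := by
  rw [← hI.centralizer_eq_center]
  intro a ha
  calc a * (r * t) = r * s * (a * (r * t)) := by rw [hrs, one_mul]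
    _ = r * (s * a * r * t) := by simp only [mul_assoc]
    _ = r * t * a := by rw [ht a ha, mul_assoc]

theorem eq_mul_of_intertwines_conj (hI : IsFaithfulLeftIdeal I) (hrs : r * s = 1)
    (ht : ∀ a ∈ I, s * a * r * t = t * a) : t = r * t * s := by
  have rt_comm := Semigroup.mem_center_iff.1 (hI.mul_mem_center_of_intertwines_conj hrs ht)
  refine hI.eq_of_mul_eq fun a ha ↦ ?_
  calc t * a = s * (a * (r * t)) := by rw [← ht a ha]; simp only [mul_assoc]
    _ = r * t * s * a := by rw [rt_comm, ← mul_assoc, rt_comm]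

theorem intertwines_conj_iff_exists_mem_center (hI : IsFaithfulLeftIdeal I) (hrs : r * s = 1) :
    (∀ a ∈ I, s * a * r * t = t * a) ↔ ∃ z ∈ Set.center M, t = z * s := by
  refine ⟨fun ht ↦ ⟨r * t, hI.mul_mem_center_of_intertwines_conj hrs ht,
    hI.eq_mul_of_intertwines_conj hrs ht⟩, ?_⟩
  rintro ⟨z, hz, rfl⟩ a -
  have z_comm := Semigroup.mem_center_iff.1 hz
  calc s * a * r * (z * s) = s * a * r * (s * z) := by rw [z_comm]
    _ = s * a * (r * s) * z := by simp only [mul_assoc]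
    _ = z * s * a := by rw [hrs, mul_one, z_comm, mul_assoc]

end IsFaithfulLeftIdeal

section CStarRing

variable {A : Type*} [NonUnitalNormedRing A] [StarRing A] [CStarRing A]

instance faithfulSMul_self_of_cstarRing : FaithfulSMul A A where
  eq_of_smul_eq_smul {u v} h := by
    rw [← sub_eq_zero, ← CStarRing.mul_star_self_eq_zero_iff, sub_mul, sub_eq_zero]
    exact h _

instance faithfulSMul_mulOpposite_self_of_cstarRing : FaithfulSMul Aᵐᵒᵖ A where
  eq_of_smul_eq_smul {u v} h := by
    rw [← MulOpposite.unop_inj, ← sub_eq_zero, ← CStarRing.star_mul_self_eq_zero_iff, mul_sub,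
      sub_eq_zero]
    exact h _

end CStarRing

section Multiplier

variable {𝕜 A : Type*} [NontriviallyNormedField 𝕜] [NonUnitalNormedRing A] [NormedSpace 𝕜 A]
  [SMulCommClass 𝕜 A A] [IsScalarTower 𝕜 A A]

theorem multiplier_snd_mul_coe (m : 𝓜(𝕜, A)) (a b : A) :
    (m * (a : 𝓜(𝕜, A))).snd b = m.snd b * a := by
  simp [DoubleCentralizer.mul_snd]

theorem multiplier_ext_snd [FaithfulSMul Aᵐᵒᵖ A] {x y : 𝓜(𝕜, A)} (h : ∀ b, x.snd b = y.snd b) :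
    x = y := by
  refine DoubleCentralizer.ext _ _ _ _ (Prod.ext ?_ (ContinuousLinearMap.ext h))
  ext a
  refine MulOpposite.op_injective (eq_of_smul_eq_smul fun b : A ↦ ?_)
  calc b * x.fst a = x.snd b * a := (x.central b a).symm
    _ = b * y.fst a := by rw [h, y.central]

theorem multiplier_mul_coe [FaithfulSMul Aᵐᵒᵖ A] (m : 𝓜(𝕜, A)) (a : A) :
    m * (a : 𝓜(𝕜, A)) = (m.fst a : 𝓜(𝕜, A)) :=
  multiplier_ext_snd fun b ↦ (multiplier_snd_mul_coe m a b).trans (m.central b a)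

variable [FaithfulSMul A A] [FaithfulSMul Aᵐᵒᵖ A]

theorem multiplier_ext_mul_coe {x y : 𝓜(𝕜, A)}
    (h : ∀ a : A, x * (a : 𝓜(𝕜, A)) = y * (a : 𝓜(𝕜, A))) : x = y := by
  refine multiplier_ext_snd fun b ↦ eq_of_smul_eq_smul fun a : A ↦ ?_
  calc x.snd b * a = (x * (a : 𝓜(𝕜, A))).snd b := (multiplier_snd_mul_coe x a b).symm
    _ = y.snd b * a := by rw [h, multiplier_snd_mul_coe]

theorem isFaithfulLeftIdeal_range_coe :
    IsFaithfulLeftIdeal (Set.range fun a : A ↦ (a : 𝓜(𝕜, A))) where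
  mul_mem := by
    rintro m _ ⟨a, rfl⟩
    exact ⟨m.fst a, (multiplier_mul_coe m a).symm⟩
  eq_of_mul_eq h := multiplier_ext_mul_coe fun a ↦ h _ ⟨a, rfl⟩

theorem intertwiners_of_inner_endomorphism_eq_center_mul_isometry_general
    {r s : 𝓜(𝕜, A)} (hrs : r * s = 1) {ρ : A → A}
    (hρ : ∀ a : A, (ρ a : 𝓜(𝕜, A)) = s * (a : 𝓜(𝕜, A)) * r) :
    {t : 𝓜(𝕜, A) | ∀ a : A, (ρ a : 𝓜(𝕜, A)) * t = t * (a : 𝓜(𝕜, A))} =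
      {t : 𝓜(𝕜, A) | ∃ z ∈ Set.center 𝓜(𝕜, A), t = z * s} := by
  ext t
  simp only [Set.mem_ofPred_eq, hρ]
  rw [← isFaithfulLeftIdeal_range_coe.intertwines_conj_iff_exists_mem_center hrs,
    Set.forall_mem_range]

end Multiplier

theorem intertwiners_of_inner_endomorphism_eq_center_mul_isometry
    {A : Type*} [NonUnitalCStarAlgebra A]
    (s : 𝓜(ℂ, A)) (hs : star s * s = 1)
    (ρ : A →⋆ₙₐ[ℂ] A)
    (hρ : ∀ a : A, (ρ a : 𝓜(ℂ, A)) = s * (a : 𝓜(ℂ, A)) * star s) :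
    {t : 𝓜(ℂ, A) | ∀ a : A, (ρ a : 𝓜(ℂ, A)) * t = t * (a : 𝓜(ℂ, A))} =
      {t : 𝓜(ℂ, A) | ∃ z ∈ Set.center 𝓜(ℂ, A), t = z * s} := by
  exact intertwiners_of_inner_endomorphism_eq_center_mul_isometry_general hs hρ
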